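/- Totality restricts iterative learning from informant: there exists a class 𝓛 of languages that is Ex-learnable from informant by an iterative (partial computable) learner, but 𝓛 is not Ex-learnable from informant by any iterative learner that is a total computable function on finite informant sequences. -/

import Mathlib

/-- `W p` is the domain of the `p`-th partial computable function
(the `W`-hypothesis space for an acceptable numbering). -/
def W (p : ℕ) : Set ℕ := {n | ((Denumerable.ofNat Nat.Partrec.Code p).eval n).Dom}

/-- A labeled datum: a natural number together with a Boolean label. -/
abbrev Datum := ℕ × Bool

/-- The initial segment `I[t]` of an informant `I`, of length `t`. -/
def seg (I : ℕ → Datum) (t : ℕ) : List Datum := (List.range t).map I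

/-- The positively labeled numbers occurring in a finite sequence. -/
def posOf (σ : List Datum) : Set ℕ := {x | (x, true) ∈ σ}

/-- The negatively labeled numbers occurring in a finite sequence. -/
def negOf (σ : List Datum) : Set ℕ := {x | (x, false) ∈ σ}

/-- A finite sequence over ℕ × Bool is consistently labeled. -/
def ConsistentSeq (σ : List Datum) : Prop :=
  ∀ x b b', (x, b) ∈ σ → (x, b') ∈ σ → b = b'

/-- `I` is an informant for the language `L`. -/
def IsInformant (L : Set ℕ) (I : ℕ → Datum) : Prop :=
  (∀ t, ((I t).2 = true ↔ (I t).1 ∈ L)) ∧ Function.Surjective (fun t => (I t).1)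

/-- `M` Ex-learns `L` from the particular informant `I`. -/
def ExLearnsFrom (M : List Datum →. ℕ) (L : Set ℕ) (I : ℕ → Datum) : Prop :=
  ∃ t₀ e, W e = L ∧ ∀ t, t₀ ≤ t → M (seg I t) = Part.some e

/-- `M` Ex-learns `L` from informant. -/
def ExLearns (M : List Datum →. ℕ) (L : Set ℕ) : Prop :=
  ∀ I, IsInformant L I → ExLearnsFrom M L I

/-- `M` is an iterative learner: its value on `σ⌢x` is computed from its
value on `σ` and the datum `x` alone. -/
def Iterative (M : List Datum →. ℕ) : Prop :=
  ∃ h : ℕ × Datum →. ℕ, Partrec h ∧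
    ∀ σ x, M (σ ++ [x]) = (M σ).bind (fun e => h (e, x))

/-- `𝓛 ∈ [ItInfEx]`: some iterative partial computable learner
Ex-learns every member of `𝓛` from informant. -/
def ItInfEx (𝓛 : Set (Set ℕ)) : Prop :=
  ∃ M : List Datum →. ℕ, Partrec M ∧ Iterative M ∧ ∀ L ∈ 𝓛, ExLearns M L

/-! Let `M_e` be the `e`-th partial computable learner, and call the numbers `⟨e, t⟩` *column* `e`.
Present `0, 1, 2, …` to `M_e` in this order, labeling `m` positively iff `m` lies in column `e` and
the positive label makes `M_e` change its hypothesis. If `M_e` never diverges along the way, this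
defines a decidable language `D_e`, and the class consists of all `D_e` and all `D_e ∪ {n}` with `n`
in column `e`.

An iterative learner reads `e` off any positive datum and can then decide whether that datum lies in
`D_e`; if it does not, it is the exceptional `n`, which is stored in the hypothesis. On the other
hand, let a total iterative `M_e` have converged on `D_e` at stage `t₀`, and let `n = ⟨e, t₀⟩`. By
construction `M_e` does not change its hypothesis on `n`, whichever label `n` gets. So `n ∉ D_e`,
and from `n` onwards `M_e` cannot distinguish `D_e` from `D_e ∪ {n}`. -/

section Computability

variable {α σ : Type*} [Primcodable α] [Primcodable σ]

theorem rePred_or {p q : α → Prop} (hp : REPred p) (hq : REPred q) :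
    REPred fun a => p a ∨ q a := by
  obtain ⟨k, hk, hdom⟩ := Partrec.merge' hp hq
  exact hk.dom_re.of_eq fun a => by simpa [Part.assert] using (hdom a).2

theorem rePred_true_mem {f : α →. Bool} (hf : Partrec f) : REPred fun a => true ∈ f a := by
  have hfilter : Partrec fun a => (f a).bind fun b => bif b then Part.some () else Part.none :=
    hf.bind (Partrec.cond Computable.snd (Computable.const ()) Partrec.none)
  refine hfilter.dom_re.of_eq fun a => ?_
  simp [Part.dom_iff_mem, Part.mem_bind_iff]

/-- The s-m-n theorem for the numbering `W`. -/
theorem exists_computable_W_eq {R : α → ℕ → Prop} (hR : REPred fun p : α × ℕ => R p.1 p.2) :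
    ∃ g : α → ℕ, Computable g ∧ ∀ a, W (g a) = {n | R a n} := by
  obtain ⟨c, hc⟩ := Nat.Partrec.Code.exists_code.1 hR
  refine ⟨fun a => Encodable.encode (c.curry (Encodable.encode a)),
    Computable.encode.comp
      (Nat.Partrec.Code.primrec₂_curry.to_comp.comp (Computable.const c) Computable.encode),
    fun a => ?_⟩
  ext n
  simp [W, hc, Part.assert]

theorem exists_W_eq_empty : ∃ o, W o = ∅ := by
  have hR : REPred fun _ : Unit × ℕ => False :=
    (Partrec.none (σ := Unit)).dom_re.of_eq fun _ => Iff.rfl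
  obtain ⟨g, -, hg⟩ := exists_computable_W_eq (R := fun _ _ => False) hR
  exact ⟨g (), hg ()⟩

theorem partrec_foldlM {h : σ × α →. σ} (hh : Partrec h) (s : σ) :
    Partrec fun l : List α => l.foldlM (fun s x => h (s, x)) s := by
  have hstep : Partrec₂ fun (l : List α) (p : ℕ × σ) =>
      (l[p.1]? : Part α).bind fun x => h (p.2, x) :=
    (Computable.list_getElem?.comp Computable.fst
        (Computable.fst.comp Computable.snd)).ofOption.bind
      (hh.comp ((Computable.snd.comp (Computable.snd.comp Computable.fst)).pair Computable.snd))
  refine (Partrec.nat_rec Computable.list_length (Computable.const s) hstep).of_eq fun l => ?_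
  have htake : ∀ n ≤ l.length,
      (Nat.rec (Part.some s) (fun i IH => IH.bind fun s => (l[i]? : Part α).bind fun x => h (s, x))
        n : Part σ) = (l.take n).foldlM (fun s x => h (s, x)) s := by
    intro n hn
    induction n with
    | zero => rfl
    | succ n ih =>
      have hget : l[n]? = some l[n] := List.getElem?_eq_getElem hn
      have hIH := ih (by omega)
      dsimp only at hIH ⊢
      rw [hIH, List.take_succ_eq_append_getElem hn, List.foldlM_append, hget]
      simp [Part.bind_eq_bind]
  simpa using htake l.length le_rfl

end Computability

section Informants

theorem seg_succ (I : ℕ → Datum) (t : ℕ) : seg I (t + 1) = seg I t ++ [I t] := by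
  simp [seg, List.range_succ]

theorem seg_congr {I J : ℕ → Datum} {t : ℕ} (h : ∀ k < t, I k = J k) : seg I t = seg J t :=
  List.map_congr_left fun k hk => h k (List.mem_range.1 hk)

theorem ConsistentSeq.append_singleton {σ : List Datum} {x : Datum} (hσ : ConsistentSeq σ)
    (hx : ∀ y ∈ σ, y.1 ≠ x.1) : ConsistentSeq (σ ++ [x]) := by
  intro k b b' hb hb'
  rcases List.mem_append.1 hb with hb | hb <;> rcases List.mem_append.1 hb' with hb' | hb'
  · exact hσ k b b' hb hb'
  · exact absurd (congrArg Prod.fst (List.mem_singleton.1 hb')) (hx (k, b) hb)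
  · exact absurd (congrArg Prod.fst (List.mem_singleton.1 hb)) (hx (k, b') hb')
  · exact congrArg Prod.snd ((List.mem_singleton.1 hb).trans (List.mem_singleton.1 hb').symm)

theorem IsInformant.exists_eq_true {L : Set ℕ} {I : ℕ → Datum} (hI : IsInformant L I) {m : ℕ}
    (hm : m ∈ L) : ∃ t, I t = (m, true) := by
  obtain ⟨t, rfl⟩ := hI.2 m
  exact ⟨t, Prod.ext rfl ((hI.1 t).2 hm)⟩

theorem IsInformant.forall_datum {L : Set ℕ} {I : ℕ → Datum} (hI : IsInformant L I)
    {P : Datum → Prop} (hneg : ∀ m, P (m, false)) (hpos : ∀ m ∈ L, P (m, true)) (t : ℕ) :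
    P (I t) := by
  rcases ht : I t with ⟨m, _ | _⟩
  · exact hneg m
  · exact hpos m (by simpa [ht] using hI.1 t)

open Classical in
/-- The canonical informant for `L`, which presents the natural numbers in increasing order. -/
noncomputable def canonicalInformant (L : Set ℕ) (n : ℕ) : Datum := (n, decide (n ∈ L))

theorem isInformant_canonicalInformant (L : Set ℕ) : IsInformant L (canonicalInformant L) :=
  ⟨fun n => by simp [canonicalInformant], fun n => ⟨n, rfl⟩⟩

theorem canonicalInformant_of_mem {L : Set ℕ} {n : ℕ} (hn : n ∈ L) :
    canonicalInformant L n = (n, true) := by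
  simp [canonicalInformant, hn]

theorem canonicalInformant_congr {L L' : Set ℕ} {n : ℕ} (h : n ∈ L ↔ n ∈ L') :
    canonicalInformant L n = canonicalInformant L' n := by
  simp [canonicalInformant, h]

theorem seg_canonicalInformant_insert (L : Set ℕ) (n : ℕ) :
    seg (canonicalInformant (insert n L)) (n + 1) =
      seg (canonicalInformant L) n ++ [(n, true)] := by
  rw [seg_succ, canonicalInformant_of_mem (Set.mem_insert n L)]
  congr 1
  exact seg_congr fun k hk => canonicalInformant_congr (by simp [hk.ne])

end Informants

section Learners

variable {M : List Datum →. ℕ} {L L' : Set ℕ} {I J : ℕ → Datum}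

theorem ExLearnsFrom.eq_of_eqOn_seg {t₀ : ℕ} (hL : ExLearnsFrom M L I)
    (hL' : ExLearnsFrom M L' J) (h : ∀ t ≥ t₀, M (seg I t) = M (seg J t)) : L = L' := by
  obtain ⟨t₁, e, rfl, he⟩ := hL
  obtain ⟨t₂, e', rfl, he'⟩ := hL'
  set t := max t₀ (max t₁ t₂)
  have hee' : Part.some e = Part.some e' := by
    rw [← he t (by omega), ← he' t (by omega), h t (by omega)]
  rw [Part.some_inj.1 hee']

theorem Iterative.map_append_singleton_congr (hM : Iterative M) {σ τ : List Datum}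
    (h : M σ = M τ) (x : Datum) : M (σ ++ [x]) = M (τ ++ [x]) := by
  obtain ⟨f, -, hf⟩ := hM
  rw [hf, hf, h]

theorem Iterative.map_seg_eq_of_le (hM : Iterative M) {t₀ t : ℕ}
    (h : M (seg I t₀) = M (seg J t₀)) (hIJ : ∀ k ≥ t₀, I k = J k) (ht : t₀ ≤ t) :
    M (seg I t) = M (seg J t) := by
  induction t, ht using Nat.le_induction with
  | base => exact h
  | succ t ht ih => rw [seg_succ, seg_succ, hIJ t ht, hM.map_append_singleton_congr ih]

/-- An iterative learner that has forgotten a difference between two languages never recovers it. -/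
theorem Iterative.map_seg_canonicalInformant_ne (hM : Iterative M) (hL : ExLearns M L)
    (hL' : ExLearns M L') (hne : L ≠ L') {t : ℕ} (ht : ∀ k ≥ t, k ∈ L ↔ k ∈ L') :
    M (seg (canonicalInformant L) t) ≠ M (seg (canonicalInformant L') t) := fun h =>
  hne <| (hL _ (isInformant_canonicalInformant L)).eq_of_eqOn_seg
    (hL' _ (isInformant_canonicalInformant L')) fun _ =>
      hM.map_seg_eq_of_le h fun k hk => canonicalInformant_congr (ht k hk)

/-- The iterative learner with initial hypothesis `o` and update function `h`. -/
def iterLearner (h : ℕ × Datum →. ℕ) (o : ℕ) : List Datum →. ℕ :=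
  fun σ => σ.foldlM (fun s x => h (s, x)) o

variable {h : ℕ × Datum →. ℕ} {o s t₀ : ℕ}

theorem partrec_iterLearner (hh : Partrec h) (o : ℕ) : Partrec (iterLearner h o) :=
  partrec_foldlM hh o

theorem iterLearner_append_singleton (h : ℕ × Datum →. ℕ) (o : ℕ) (σ : List Datum) (x : Datum) :
    iterLearner h o (σ ++ [x]) = (iterLearner h o σ).bind fun s => h (s, x) := by
  simp [iterLearner, List.foldlM_append, Part.bind_eq_bind]

theorem iterative_iterLearner (hh : Partrec h) (o : ℕ) : Iterative (iterLearner h o) :=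
  ⟨h, hh, iterLearner_append_singleton h o⟩

theorem iterLearner_seg_succ (ht : iterLearner h o (seg I t₀) = Part.some s) :
    iterLearner h o (seg I (t₀ + 1)) = h (s, I t₀) := by
  rw [seg_succ, iterLearner_append_singleton, ht, Part.bind_some]

theorem iterLearner_seg_dom (hdom : ∀ s t, (h (s, I t)).Dom) (t : ℕ) :
    (iterLearner h o (seg I t)).Dom := by
  induction t with
  | zero => trivial
  | succ t ih =>
    rw [seg_succ, iterLearner_append_singleton]
    exact ⟨ih, hdom _ t⟩

theorem iterLearner_seg_eq_of_fixed {t : ℕ} (ht₀ : iterLearner h o (seg I t₀) = Part.some s)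
    (ht : t₀ ≤ t) (hfix : ∀ k, t₀ ≤ k → k < t → h (s, I k) = Part.some s) :
    iterLearner h o (seg I t) = Part.some s := by
  induction t, ht using Nat.le_induction with
  | base => exact ht₀
  | succ t ht ih =>
    rw [iterLearner_seg_succ (ih fun k hk hkt => hfix k hk (by omega)), hfix t ht (by omega)]

theorem exLearnsFrom_iterLearner_of_fixed (hI : IsInformant L I)
    (ht₀ : iterLearner h o (seg I t₀) = Part.some s) (hs : W s = L)
    (hneg : ∀ m, h (s, m, false) = Part.some s) (hpos : ∀ m ∈ L, h (s, m, true) = Part.some s) :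
    ExLearnsFrom (iterLearner h o) L I :=
  ⟨t₀, s, hs, fun _ ht => iterLearner_seg_eq_of_fixed ht₀ ht fun k _ _ =>
    hI.forall_datum (P := fun x => h (s, x) = Part.some s) hneg hpos k⟩

/-- The `e`-th partial computable learner. -/
def learner (e : ℕ) : List Datum →. ℕ :=
  fun σ => (Denumerable.ofNat Nat.Partrec.Code e).eval (Encodable.encode σ)

theorem partrec₂_learner : Partrec₂ learner :=
  Nat.Partrec.Code.eval_part.comp ((Computable.ofNat _).comp Computable.fst)
    (Computable.encode.comp Computable.snd)

theorem exists_learner_eq (hM : Partrec M) : ∃ e, learner e = M := by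
  obtain ⟨c, hc⟩ := Nat.Partrec.Code.exists_code.1 hM
  refine ⟨Encodable.encode c, funext fun σ => ?_⟩
  simp [learner, hc, Part.map_id']

end Learners

section Diagonal

/-- The label which the diagonalization against `learner e` gives to `m` after the data `σ`: it is
positive iff `m = ⟨e, t⟩` for some `t` and `learner e` changes its hypothesis on `(m, true)`. -/
def diagTest (e m : ℕ) (σ : List Datum) : Part Bool :=
  (learner e (σ ++ [(m, true)])).bind fun u =>
    (learner e σ).map fun v => m.unpair.1 == e && u != v

/-- The data `(0, b₀), …, (m - 1, bₘ₋₁)` labeled by the diagonalization against `learner e`. -/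
def diagSeq (e : ℕ) : ℕ → Part (List Datum)
  | 0 => Part.some []
  | m + 1 => (diagSeq e m).bind fun σ => (diagTest e m σ).map fun b => σ ++ [(m, b)]

/-- The label of `m` in the diagonalization against `learner e`. -/
def diagLabel (e m : ℕ) : Part Bool := (diagSeq e m).bind (diagTest e m)

/-- The diagonal language of `learner e`. -/
def diagLang (e : ℕ) : Set ℕ := {m | true ∈ diagLabel e m}

/-- The languages which differ from a totally defined diagonal language `diagLang e` by at most one
additional element of the form `⟨e, t⟩`. -/
def diagClass : Set (Set ℕ) :=
  {L | ∃ e, (∀ m, (diagLabel e m).Dom) ∧ diagLang e ⊆ L ∧ (∀ m ∈ L, m.unpair.1 = e) ∧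
    (L \ diagLang e).Subsingleton}

theorem partrec_diagTest :
    Partrec fun p : (ℕ × ℕ) × List Datum => diagTest p.1.1 p.1.2 p.2 := by
  have he : Computable fun p : (ℕ × ℕ) × List Datum => p.1.1 := Computable.fst.comp Computable.fst
  have hm : Computable fun p : (ℕ × ℕ) × List Datum => p.1.2 := Computable.snd.comp Computable.fst
  have happend : Computable fun p : (ℕ × ℕ) × List Datum => p.2 ++ [(p.1.2, true)] :=
    Computable.list_concat.comp Computable.snd (hm.pair (Computable.const true))
  have htest : Primrec fun q : (((ℕ × ℕ) × List Datum) × ℕ) × ℕ =>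
      q.1.1.1.2.unpair.1 == q.1.1.1.1 && q.1.2 != q.2 :=
    have hp : Primrec fun q : (((ℕ × ℕ) × List Datum) × ℕ) × ℕ => q.1.1.1 :=
      Primrec.fst.comp (Primrec.fst.comp Primrec.fst)
    Primrec.and.comp
      (Primrec.beq.comp (Primrec.fst.comp (Primrec.unpair.comp (Primrec.snd.comp hp)))
        (Primrec.fst.comp hp))
      (Primrec.not.comp (Primrec.beq.comp (Primrec.snd.comp Primrec.fst) Primrec.snd))
  exact (partrec₂_learner.comp he happend).bind
    (((partrec₂_learner.comp he Computable.snd).comp Computable.fst).map htest.to_comp)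

theorem partrec₂_diagSeq : Partrec₂ diagSeq := by
  have htest : Partrec fun q : (ℕ × ℕ) × ℕ × List Datum => diagTest q.1.1 q.2.1 q.2.2 :=
    partrec_diagTest.comp (g := fun q : (ℕ × ℕ) × ℕ × List Datum => ((q.1.1, q.2.1), q.2.2))
      (((Computable.fst.comp Computable.fst).pair (Computable.fst.comp Computable.snd)).pair
        (Computable.snd.comp Computable.snd))
  have happend : Computable₂ fun (q : (ℕ × ℕ) × ℕ × List Datum) (b : Bool) =>
      q.2.2 ++ [(q.2.1, b)] :=
    Computable.list_concat.comp (Computable.snd.comp (Computable.snd.comp Computable.fst))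
      ((Computable.fst.comp (Computable.snd.comp Computable.fst)).pair Computable.snd)
  refine (Partrec.nat_rec Computable.snd (Computable.const [])
    (htest.map happend).to₂).of_eq fun ⟨e, m⟩ => ?_
  induction m with
  | zero => rfl
  | succ m ih => exact congrArg (Part.bind · _) ih

theorem partrec₂_diagLabel : Partrec₂ diagLabel := partrec₂_diagSeq.bind partrec_diagTest

variable {e m : ℕ} {σ : List Datum}

theorem diagTest_dom :
    (diagTest e m σ).Dom ↔ (learner e (σ ++ [(m, true)])).Dom ∧ (learner e σ).Dom :=
  Part.bind_dom.trans exists_prop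

theorem true_mem_diagTest (hdom : (diagTest e m σ).Dom) :
    true ∈ diagTest e m σ ↔ m.unpair.1 = e ∧ learner e (σ ++ [(m, true)]) ≠ learner e σ := by
  obtain ⟨hu, hv⟩ := diagTest_dom.1 hdom
  obtain ⟨u, hu⟩ := Part.dom_iff_mem.1 hu
  obtain ⟨v, hv⟩ := Part.dom_iff_mem.1 hv
  simp [diagTest, Part.eq_some_iff.2 hu, Part.eq_some_iff.2 hv, eq_comm (a := true)]

theorem diagLabel_eq_of_dom (hdom : (diagLabel e m).Dom) [Decidable (m ∈ diagLang e)] :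
    diagLabel e m = Part.some (decide (m ∈ diagLang e)) := by
  obtain ⟨b, hb⟩ := Part.dom_iff_mem.1 hdom
  have hm : m ∈ diagLang e ↔ b = true := by
    rw [diagLang, Set.mem_ofPred_eq, Part.eq_some_iff.2 hb, Part.mem_some_iff, eq_comm]
  simp [Part.eq_some_iff.2 hb, hm]

theorem diagSeq_eq_seg (hdom : ∀ m, (diagLabel e m).Dom) (m : ℕ) :
    diagSeq e m = Part.some (seg (canonicalInformant (diagLang e)) m) := by
  classical
  induction m with
  | zero => rfl
  | succ m ih =>
    have htest : diagTest e m (seg (canonicalInformant (diagLang e)) m) = diagLabel e m := by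
      rw [diagLabel, ih, Part.bind_some]
    rw [diagSeq, ih, Part.bind_some, htest, diagLabel_eq_of_dom (hdom m), Part.map_some, seg_succ,
      canonicalInformant]

theorem mem_diagLang_iff (hdom : ∀ m, (diagLabel e m).Dom) :
    m ∈ diagLang e ↔ m.unpair.1 = e ∧
      learner e (seg (canonicalInformant (diagLang e)) m ++ [(m, true)]) ≠
        learner e (seg (canonicalInformant (diagLang e)) m) := by
  have hlabel : diagLabel e m = diagTest e m (seg (canonicalInformant (diagLang e)) m) := by
    rw [diagLabel, diagSeq_eq_seg hdom, Part.bind_some]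
  rw [← true_mem_diagTest (hlabel ▸ hdom m), ← hlabel]
  rfl

theorem consistentSeq_of_mem_diagSeq (hσ : σ ∈ diagSeq e m) :
    ConsistentSeq σ ∧ ∀ x ∈ σ, x.1 < m := by
  induction m generalizing σ with
  | zero =>
    obtain rfl := (Part.mem_some_iff.1 hσ)
    simp [ConsistentSeq]
  | succ m ih =>
    obtain ⟨τ, hτ, hστ⟩ := Part.mem_bind_iff.1 hσ
    obtain ⟨b, -, rfl⟩ := (Part.mem_map_iff _).1 hστ
    obtain ⟨hcons, hlt⟩ := ih hτ
    refine ⟨hcons.append_singleton fun x hx => (hlt x hx).ne, fun x hx => ?_⟩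
    rcases List.mem_append.1 hx with hx | hx
    · exact (hlt x hx).trans m.lt_succ_self
    · simp [List.mem_singleton.1 hx]

theorem diagTest_dom_of_mem_diagSeq (htot : ∀ σ, ConsistentSeq σ → (learner e σ).Dom)
    (hσ : σ ∈ diagSeq e m) : (diagTest e m σ).Dom := by
  obtain ⟨hcons, hlt⟩ := consistentSeq_of_mem_diagSeq hσ
  exact diagTest_dom.2 ⟨htot _ (hcons.append_singleton fun x hx => (hlt x hx).ne), htot _ hcons⟩

theorem diagLabel_dom (htot : ∀ σ, ConsistentSeq σ → (learner e σ).Dom) (m : ℕ) :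
    (diagLabel e m).Dom := by
  have hseq : (diagSeq e m).Dom := by
    induction m with
    | zero => trivial
    | succ m ih => exact ⟨ih, diagTest_dom_of_mem_diagSeq htot (Part.get_mem ih)⟩
  exact ⟨hseq, diagTest_dom_of_mem_diagSeq htot (Part.get_mem hseq)⟩

theorem diagLang_mem_diagClass (hdom : ∀ m, (diagLabel e m).Dom) : diagLang e ∈ diagClass :=
  ⟨e, hdom, subset_rfl, fun _ hm => ((mem_diagLang_iff hdom).1 hm).1, by simp⟩

theorem insert_diagLang_mem_diagClass (hdom : ∀ m, (diagLabel e m).Dom) (hm : m.unpair.1 = e) :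
    insert m (diagLang e) ∈ diagClass := by
  refine ⟨e, hdom, Set.subset_insert _ _, ?_, ?_⟩
  · rintro k (rfl | hk)
    exacts [hm, ((mem_diagLang_iff hdom).1 hk).1]
  · exact (Set.subsingleton_singleton (a := m)).anti fun k hk => hk.1.resolve_right hk.2

theorem exists_diagClass_not_exLearns (hiter : Iterative (learner e))
    (htot : ∀ σ, ConsistentSeq σ → (learner e σ).Dom) :
    ∃ L ∈ diagClass, ¬ ExLearns (learner e) L := by
  by_contra! hlearn
  have hdom := diagLabel_dom htot
  have hD : ExLearns (learner e) (diagLang e) := hlearn _ (diagLang_mem_diagClass hdom)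
  obtain ⟨t₀, a, -, hconv⟩ := hD _ (isInformant_canonicalInformant _)
  set n := Nat.pair e t₀
  have hcol : n.unpair.1 = e := by simp [n]
  have ht₀ : t₀ ≤ n := Nat.right_le_pair e t₀
  have hkeep : learner e (seg (canonicalInformant (diagLang e)) (n + 1)) =
      learner e (seg (canonicalInformant (diagLang e)) n) :=
    (hconv (n + 1) (by omega)).trans (hconv n ht₀).symm
  by_cases hn : n ∈ diagLang e
  · refine ((mem_diagLang_iff hdom).1 hn).2 ?_
    rwa [seg_succ, canonicalInformant_of_mem hn] at hkeep
  · refine hiter.map_seg_canonicalInformant_ne (t := n + 1) hD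
      (hlearn _ (insert_diagLang_mem_diagClass hdom hcol))
      (fun h => hn (h ▸ Set.mem_insert n _)) (fun k hk => ?_) ?_
    · simp [show k ≠ n by omega]
    · rw [hkeep, seg_canonicalInformant_insert]
      by_contra hne
      exact hn ((mem_diagLang_iff hdom).2 ⟨hcol, Ne.symm hne⟩)

end Diagonal

section Learnability

theorem exists_computable_W_eq_diagLang_union :
    ∃ g : ℕ × Option ℕ → ℕ, Computable g ∧
      ∀ e x, W (g (e, x)) = {m | m ∈ diagLang e ∨ x = some m} := by
  have hdiag : REPred fun p : (ℕ × Option ℕ) × ℕ => p.2 ∈ diagLang p.1.1 :=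
    rePred_true_mem
      (partrec₂_diagLabel.comp (Computable.fst.comp Computable.fst) Computable.snd)
  have hextra : PrimrecPred fun p : (ℕ × Option ℕ) × ℕ => p.1.2 = some p.2 :=
    Primrec.eq.comp (Primrec.snd.comp Primrec.fst) (Primrec.option_some.comp Primrec.snd)
  obtain ⟨g, hg, hW⟩ := exists_computable_W_eq
    (R := fun q : ℕ × Option ℕ => fun m => m ∈ diagLang q.1 ∨ q.2 = some m)
    (rePred_or hdiag hextra.computablePred.to_re)
  exact ⟨g, hg, fun e x => hW (e, x)⟩

/-- The update function of the learner for `diagClass`. Here `o` is the initial hypothesis,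
`g (e, none)` stands for `diagLang e`, and `g (e, some n)` for `diagLang e ∪ {n}`. -/
def diagUpdate (g : ℕ × Option ℕ → ℕ) (o : ℕ) : ℕ × Datum →. ℕ := fun (s, m, b) =>
  bif b then
    (diagLabel m.unpair.1 m).map fun v =>
      bif v then bif s == o then g (m.unpair.1, none) else s else g (m.unpair.1, some m)
  else Part.some s

theorem partrec_diagUpdate {g : ℕ × Option ℕ → ℕ} (hg : Computable g) (o : ℕ) :
    Partrec (diagUpdate g o) := by
  have hm : Computable fun p : ℕ × Datum => p.2.1 := Computable.fst.comp Computable.snd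
  have he : Computable fun p : ℕ × Datum => p.2.1.unpair.1 :=
    Computable.fst.comp (Computable.unpair.comp hm)
  have heq : Computable fun q : (ℕ × Datum) × Bool => q.1.1 == o :=
    (Primrec.beq.comp (Primrec.fst.comp Primrec.fst) (Primrec.const o)).to_comp
  have hnew : Computable₂ fun (p : ℕ × Datum) (v : Bool) =>
      bif v then bif p.1 == o then g (p.2.1.unpair.1, none) else p.1
      else g (p.2.1.unpair.1, some p.2.1) :=
    Computable.cond Computable.snd
      (Computable.cond heq (hg.comp ((he.pair (Computable.const none)).comp Computable.fst))
        (Computable.fst.comp Computable.fst))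
      (hg.comp ((he.pair (Computable.option_some.comp hm)).comp Computable.fst))
  exact Partrec.cond (Computable.snd.comp Computable.snd)
    ((partrec₂_diagLabel.comp he hm).map hnew) Computable.fst

variable {g : ℕ × Option ℕ → ℕ} {o e m : ℕ} {L : Set ℕ} {I : ℕ → Datum}

theorem diagUpdate_false (g : ℕ × Option ℕ → ℕ) (o s m : ℕ) :
    diagUpdate g o (s, m, false) = Part.some s := rfl

theorem diagUpdate_of_mem (hm : m.unpair.1 = e) (hmem : m ∈ diagLang e) (s : ℕ) :
    diagUpdate g o (s, m, true) = Part.some (if s = o then g (e, none) else s) := by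
  have hlabel : diagLabel e m = Part.some true := Part.eq_some_iff.2 hmem
  simp [diagUpdate, hm, hlabel, Bool.cond_eq_ite]

theorem diagUpdate_of_notMem (hm : m.unpair.1 = e) (hdom : (diagLabel e m).Dom)
    (hmem : m ∉ diagLang e) (s : ℕ) :
    diagUpdate g o (s, m, true) = Part.some (g (e, some m)) := by
  classical
  have hlabel : diagLabel e m = Part.some false := by simp [diagLabel_eq_of_dom hdom, hmem]
  simp [diagUpdate, hm, hlabel]

theorem diagUpdate_dom (hI : IsInformant L I) (hdom : ∀ m, (diagLabel e m).Dom)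
    (hcol : ∀ m ∈ L, m.unpair.1 = e) (s t : ℕ) : (diagUpdate g o (s, I t)).Dom := by
  refine hI.forall_datum (P := fun x => (diagUpdate g o (s, x)).Dom) (fun _ => trivial)
    (fun m hm => ?_) t
  by_cases hmem : m ∈ diagLang e
  · simp [diagUpdate_of_mem (hcol m hm) hmem]
  · simp [diagUpdate_of_notMem (hcol m hm) (hdom m) hmem]

theorem exLearns_diagUpdate_of_empty (ho : W o = ∅) :
    ExLearns (iterLearner (diagUpdate g o) o) ∅ := fun _ hI =>
  exLearnsFrom_iterLearner_of_fixed (t₀ := 0) hI rfl ho (diagUpdate_false g o o) (by simp)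

theorem exLearns_diagUpdate_of_diagLang (hW : W (g (e, none)) = diagLang e)
    (hcol : ∀ m ∈ diagLang e, m.unpair.1 = e) (hne : (diagLang e).Nonempty) :
    ExLearns (iterLearner (diagUpdate g o) o) (diagLang e) := by
  intro I hI
  have hpos : ∃ t, (I t).2 = true := by
    obtain ⟨m, hm⟩ := hne
    obtain ⟨t, ht⟩ := hI.exists_eq_true hm
    exact ⟨t, by rw [ht]⟩
  classical
  set t₀ := Nat.find hpos
  have hbefore : iterLearner (diagUpdate g o) o (seg I t₀) = Part.some o := by
    refine iterLearner_seg_eq_of_fixed (t₀ := 0) rfl t₀.zero_le fun k _ hk => ?_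
    have hneg : I k = ((I k).1, false) := Prod.ext rfl (by simpa using Nat.find_min hpos hk)
    rw [hneg, diagUpdate_false]
  have hat : iterLearner (diagUpdate g o) o (seg I (t₀ + 1)) = Part.some (g (e, none)) := by
    have hmem : (I t₀).1 ∈ diagLang e := (hI.1 t₀).1 (Nat.find_spec hpos)
    have hI₀ : I t₀ = ((I t₀).1, true) := Prod.ext rfl (Nat.find_spec hpos)
    rw [iterLearner_seg_succ hbefore, hI₀, diagUpdate_of_mem (hcol _ hmem) hmem, if_pos rfl]
  refine exLearnsFrom_iterLearner_of_fixed hI hat hW (diagUpdate_false g o _) fun m hm => ?_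
  rw [diagUpdate_of_mem (hcol m hm) hm, ite_id]

theorem exLearns_diagUpdate_of_insert (ho : W o = ∅) {n : ℕ}
    (hW : W (g (e, some n)) = insert n (diagLang e)) (hdom : ∀ m, (diagLabel e m).Dom)
    (hcol : ∀ m ∈ insert n (diagLang e), m.unpair.1 = e) (hn : n ∉ diagLang e) :
    ExLearns (iterLearner (diagUpdate g o) o) (insert n (diagLang e)) := by
  intro I hI
  have hne : g (e, some n) ≠ o := by
    rintro rfl
    exact (Set.insert_nonempty n (diagLang e)).ne_empty (hW.symm.trans ho)
  have hnew (s : ℕ) : diagUpdate g o (s, n, true) = Part.some (g (e, some n)) :=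
    diagUpdate_of_notMem (hcol n (Set.mem_insert n _)) (hdom n) hn s
  obtain ⟨t₀, ht₀⟩ := hI.exists_eq_true (Set.mem_insert n (diagLang e))
  obtain ⟨s, hs⟩ := Part.dom_iff_mem.1
    (iterLearner_seg_dom (o := o) (diagUpdate_dom (g := g) (o := o) hI hdom hcol) t₀)
  have hat : iterLearner (diagUpdate g o) o (seg I (t₀ + 1)) = Part.some (g (e, some n)) := by
    rw [iterLearner_seg_succ (Part.eq_some_iff.2 hs), ht₀, hnew]
  refine exLearnsFrom_iterLearner_of_fixed hI hat hW (diagUpdate_false g o _) fun m hm => ?_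
  rcases hm with rfl | hmem
  · exact hnew _
  · rw [diagUpdate_of_mem (hcol m (Or.inr hmem)) hmem, if_neg hne]

theorem itInfEx_diagClass : ItInfEx diagClass := by
  obtain ⟨o, ho⟩ := exists_W_eq_empty
  obtain ⟨g, hg, hW⟩ := exists_computable_W_eq_diagLang_union
  have hupdate := partrec_diagUpdate hg o
  refine ⟨iterLearner (diagUpdate g o) o, partrec_iterLearner hupdate o,
    iterative_iterLearner hupdate o, ?_⟩
  rintro L ⟨e, hdom, hDL, hcol, hsub⟩
  rcases hsub.eq_empty_or_singleton with hdiff | ⟨n, hdiff⟩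
  · obtain rfl : diagLang e = L := hDL.antisymm (Set.sdiff_eq_empty.1 hdiff)
    rcases (diagLang e).eq_empty_or_nonempty with hempty | hne
    · exact hempty ▸ exLearns_diagUpdate_of_empty ho
    · exact exLearns_diagUpdate_of_diagLang (by simp [hW]) hcol hne
  · have hn : n ∈ L \ diagLang e := hdiff ▸ Set.mem_singleton n
    obtain rfl : insert n (diagLang e) = L := by
      rw [← Set.singleton_union, ← hdiff, Set.sdiff_union_of_subset hDL]
    exact exLearns_diagUpdate_of_insert ho (by ext m; simp [hW, or_comm, eq_comm]) hdom hcol hn.2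

end Learnability

/-- Totality restricts iterative learning from informant: some class is Ex-learnable from
informant by an iterative (partial computable) learner, but by no iterative learner that is
defined on every finite (consistently labeled) informant sequence. -/
theorem totality_restricts_itInfEx :
    ∃ 𝓛 : Set (Set ℕ), ItInfEx 𝓛 ∧
      ¬ ∃ M : List Datum →. ℕ, Partrec M ∧ Iterative M ∧
          (∀ σ : List Datum, ConsistentSeq σ → (M σ).Dom) ∧
          ∀ L ∈ 𝓛, ExLearns M L := by
  refine ⟨diagClass, itInfEx_diagClass, ?_⟩
  rintro ⟨M, hM, hiter, htot, hlearn⟩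
  obtain ⟨e, rfl⟩ := exists_learner_eq hM
  obtain ⟨L, hL, hfail⟩ := exists_diagClass_not_exLearns hiter htot
  exact hfail (hlearn L hL)
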